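/- Assume additionally that ρ is continuous and |det ρ(a)| = 1 for all a ∈ ℝ^k. Let f and g be Schwartz functions on ℝ^d × ℝ^k, let f̃(n,a,b) = f(ρ(a)n, a+b), and for each fixed b let F₁(λ, μ, b) denote the Euclidean Fourier transform in the variables (n, a) of the additive convolution (n,a) ↦ ∫ f̃(n - m, a - c, b) g(m,c) dm dc, evaluated at (λ, μ). Fix (λ, μ) and assume that b ↦ F₁(λ, μ, b) is continuous and integrable and that its Fourier transform ν ↦ ∫_{ℝ^k} F₁(λ, μ, b) e^{-2πi⟨ν, b⟩} db is integrable. Then ∫_{ℝ^k} (∫_{ℝ^k} F₁(λ, μ, b) e^{-2πi⟨ν, b⟩} db) dν = 𝓕[(n,a) ↦ f(ρ(a)n, a)](λ, μ) · 𝓕g(λ, μ). -/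

import Mathlib

open MeasureTheory
open scoped RealInnerProductSpace

/-!
Integrating the Fourier transform of `F₁` over all frequencies evaluates `F₁` at `0`, by Fourier
inversion. At `b = 0` the extension `f̃` restricts to `(n, a) ↦ f (ρ a n, a)`, which is integrable
because the shear `(n, a) ↦ (ρ a n, a)` preserves volume, and the convolution theorem factors
`F₁ 0`.
-/

open Complex Function WithLp
open scoped Convolution FourierTransform

section MeasurePreserving

variable {α β γ : Type*} [MeasurableSpace α] [MeasurableSpace β] [MeasurableSpace γ]

theorem measurePreserving_shear {μ : Measure α} {ν : Measure β} {τ : Measure γ}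
    [SFinite μ] [SFinite ν] [SFinite τ] {φ : β → α → γ} (hφ : Measurable (uncurry φ))
    (hφμ : ∀ b, MeasurePreserving (φ b) μ τ) :
    MeasurePreserving (fun p : α × β ↦ (φ p.2 p.1, p.2)) (μ.prod ν) (τ.prod ν) :=
  Measure.measurePreserving_swap.comp <|
    ((MeasurePreserving.id ν).skew_product hφ (.of_forall fun b ↦ (hφμ b).map_eq)).comp
      Measure.measurePreserving_swap

theorem measurePreserving_of_abs_det_eq_one {E : Type*} [NormedAddCommGroup E] [NormedSpace ℝ E]
    [FiniteDimensional ℝ E] [MeasurableSpace E] [BorelSpace E] (μ : Measure E)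
    [μ.IsAddHaarMeasure] {T : E →ₗ[ℝ] E} (hT : |T.det| = 1) : MeasurePreserving T μ μ where
  measurable := T.continuous_of_finiteDimensional.measurable
  map_eq := by
    have hdet : T.det ≠ 0 := abs_ne_zero.mp (hT ▸ one_ne_zero)
    simp [Measure.map_linearMap_addHaar_eq_smul_addHaar μ hdet, abs_inv, hT]

end MeasurePreserving

theorem schwartzMap_integrable_prod {V W E : Type*}
    [NormedAddCommGroup V] [NormedSpace ℝ V] [FiniteDimensional ℝ V]
    [MeasurableSpace V] [BorelSpace V]
    [NormedAddCommGroup W] [NormedSpace ℝ W] [FiniteDimensional ℝ W]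
    [MeasurableSpace W] [BorelSpace W] [NormedAddCommGroup E] [NormedSpace ℝ E]
    (μ : Measure V) [μ.IsAddHaarMeasure] (ν : Measure W) [ν.IsAddHaarMeasure]
    (f : SchwartzMap (V × W) E) : Integrable f (μ.prod ν) :=
  have := Measure.prod.instIsAddHaarMeasure μ ν
  f.integrable

section Fourier

variable {V W E R : Type*}
  [NormedAddCommGroup V] [InnerProductSpace ℝ V] [FiniteDimensional ℝ V]
  [MeasurableSpace V] [BorelSpace V]
  [NormedAddCommGroup W] [InnerProductSpace ℝ W] [FiniteDimensional ℝ W]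
  [MeasurableSpace W] [BorelSpace W]
  [NormedAddCommGroup E] [NormedSpace ℂ E]
  [NormedRing R] [NormedAlgebra ℂ R]

theorem integral_fourier_eq_apply_zero [CompleteSpace E] {F : V → E} (hF : Integrable F)
    (hFF : Integrable (𝓕 F)) (hF₀ : ContinuousAt F 0) : ∫ ν, 𝓕 F ν = F 0 := by
  simpa [Real.fourierInv_eq] using hF.fourierInv_fourier_eq hFF hF₀

theorem fourier_eq_integral_cexp_smul (F : V → E) (ν : V) :
    𝓕 F ν = ∫ x, cexp (-(2 * (Real.pi : ℂ) * I) * ((⟪ν, x⟫ : ℝ) : ℂ)) • F x := by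
  rw [Real.fourier_eq']
  congr! 4 with x
  rw [real_inner_comm]
  push_cast
  ring

theorem fourier_eq_integral_mul_cexp (F : V → ℂ) :
    𝓕 F = fun ν ↦ ∫ x, F x * cexp (-(2 * (Real.pi : ℂ) * I) * ((⟪ν, x⟫ : ℝ) : ℂ)) := by
  simp only [funext (fourier_eq_integral_cexp_smul F), smul_eq_mul, mul_comm]

/-- The Fourier transform of `f : V × W → E` at the pair of frequencies `(l, m)`. It is written out
as an integral because `V × W` carries the sup norm, hence no inner product; `WithLp 2 (V × W)` is
the inner product space on which it is an instance of Mathlib's `𝓕`. -/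
noncomputable def prodFourierIntegral (f : V × W → E) (l : V) (m : W) : E :=
  ∫ p : V × W, cexp (-(2 * (Real.pi : ℂ) * I) * ((⟪l, p.1⟫ + ⟪m, p.2⟫ : ℝ) : ℂ)) • f p

theorem fourier_comp_ofLp_toLp (f : V × W → E) (l : V) (m : W) :
    𝓕 (f ∘ @ofLp 2 (V × W)) (toLp 2 (l, m)) = prodFourierIntegral f l m := by
  rw [fourier_eq_integral_cexp_smul, ← (volume_preserving_toLp V W).integral_comp
    (MeasurableEquiv.toLp 2 (V × W)).measurableEmbedding]
  simp only [prodFourierIntegral, prod_inner_apply, comp_apply]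

theorem mul_convolution_comp_ofLp_apply (h g : V × W → R) (x : WithLp 2 (V × W)) :
    ((h ∘ @ofLp 2 (V × W)) ⋆[.mul ℂ R] (g ∘ ofLp)) x = ∫ q : V × W, h (ofLp x - q) * g q := by
  rw [convolution_eq_swap, ← (volume_preserving_toLp V W).integral_comp
    (MeasurableEquiv.toLp 2 (V × W)).measurableEmbedding]
  simp only [comp_apply, ofLp_sub, ContinuousLinearMap.mul_apply']

theorem prodFourierIntegral_mul_convolution [CompleteSpace R] {h g : V × W → R}
    (hh : Integrable h) (hg : Integrable g) (l : V) (m : W) :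
    prodFourierIntegral (fun p ↦ ∫ q, h (p - q) * g q) l m =
      prodFourierIntegral h l m * prodFourierIntegral g l m := by
  have hconv : (h ∘ @ofLp 2 (V × W)) ⋆[.mul ℂ R] (g ∘ ofLp) =
      (fun p ↦ ∫ q, h (p - q) * g q) ∘ ofLp :=
    funext (mul_convolution_comp_ofLp_apply h g)
  have hofLp := volume_preserving_ofLp V W
  simp only [← fourier_comp_ofLp_toLp, ← hconv]
  exact Real.fourier_mul_convolution_eq (hofLp.integrable_comp_of_integrable hh)
    (hofLp.integrable_comp_of_integrable hg) _

theorem stmt_3_general [CompleteSpace R] {φ : W → V → V} (hφ : Measurable (uncurry φ))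
    (hφvol : ∀ a, MeasurePreserving (φ a)) {f g : V × W → R} (hf : Integrable f)
    (hg : Integrable g) (l : V) (m : W) {F₁ : W → R}
    (hF₁ : ∀ b, F₁ b = prodFourierIntegral
      (fun p ↦ ∫ q : V × W, f (φ (p.2 - q.2) (p.1 - q.1), (p.2 - q.2) + b) * g q) l m)
    (hF₁cont : ContinuousAt F₁ 0) (hF₁int : Integrable F₁) (h𝓕F₁int : Integrable (𝓕 F₁)) :
    ∫ ν, 𝓕 F₁ ν =
      prodFourierIntegral (fun p ↦ f (φ p.2 p.1, p.2)) l m * prodFourierIntegral g l m := by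
  have hf_shear : Integrable fun p : V × W ↦ f (φ p.2 p.1, p.2) :=
    (measurePreserving_shear hφ hφvol).integrable_comp_of_integrable hf
  calc ∫ ν, 𝓕 F₁ ν
    _ = F₁ 0 := integral_fourier_eq_apply_zero hF₁int h𝓕F₁int hF₁cont
    _ = prodFourierIntegral (fun p ↦ ∫ q : V × W,
          f (φ (p - q).2 (p - q).1, (p - q).2) * g q) l m := by
      simp only [hF₁, add_zero, Prod.fst_sub, Prod.snd_sub]
    _ = _ := prodFourierIntegral_mul_convolution hf_shear hg l m

end Fourier

/-- iterated Fourier transform of the convolution of the invariant extension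
`f̃` with `g`, integrated over the extra frequency variable, equals the product of Fourier
transforms. -/
theorem stmt_3 (d k : ℕ)
    (ρ : EuclideanSpace ℝ (Fin k) →
      (EuclideanSpace ℝ (Fin d) ≃ₗ[ℝ] EuclideanSpace ℝ (Fin d)))
    (hρ : ∀ a c x, ρ (a + c) x = ρ a (ρ c x))
    (hρ0 : ∀ x, ρ 0 x = x)
    (hcont : Continuous fun p : EuclideanSpace ℝ (Fin k) × EuclideanSpace ℝ (Fin d) =>
      ρ p.1 p.2)
    (hdet : ∀ a, |LinearMap.det ((ρ a).toLinearMap)| = 1)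
    (f g : SchwartzMap (EuclideanSpace ℝ (Fin d) × EuclideanSpace ℝ (Fin k)) ℂ)
    (l : EuclideanSpace ℝ (Fin d)) (μ : EuclideanSpace ℝ (Fin k))
    (F1 : EuclideanSpace ℝ (Fin k) → ℂ)
    (hF1 : ∀ b, F1 b =
      ∫ na : EuclideanSpace ℝ (Fin d) × EuclideanSpace ℝ (Fin k),
        Complex.exp (-(2 * (Real.pi : ℂ) * Complex.I) *
            ((⟪l, na.1⟫ + ⟪μ, na.2⟫ : ℝ) : ℂ)) *
          ∫ mc : EuclideanSpace ℝ (Fin d) × EuclideanSpace ℝ (Fin k),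
            f (ρ (na.2 - mc.2) (na.1 - mc.1), (na.2 - mc.2) + b) * g mc)
    (hF1cont : Continuous F1) (hF1int : Integrable F1)
    (hFTint : Integrable fun ν : EuclideanSpace ℝ (Fin k) =>
      ∫ b : EuclideanSpace ℝ (Fin k),
        F1 b * Complex.exp (-(2 * (Real.pi : ℂ) * Complex.I) * ((⟪ν, b⟫ : ℝ) : ℂ))) :
    (∫ ν : EuclideanSpace ℝ (Fin k),
      ∫ b : EuclideanSpace ℝ (Fin k),
        F1 b * Complex.exp (-(2 * (Real.pi : ℂ) * Complex.I) * ((⟪ν, b⟫ : ℝ) : ℂ))) =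
    (∫ na : EuclideanSpace ℝ (Fin d) × EuclideanSpace ℝ (Fin k),
        Complex.exp (-(2 * (Real.pi : ℂ) * Complex.I) *
            ((⟪l, na.1⟫ + ⟪μ, na.2⟫ : ℝ) : ℂ)) * f (ρ na.2 na.1, na.2)) *
    (∫ mc : EuclideanSpace ℝ (Fin d) × EuclideanSpace ℝ (Fin k),
        Complex.exp (-(2 * (Real.pi : ℂ) * Complex.I) *
            ((⟪l, mc.1⟫ + ⟪μ, mc.2⟫ : ℝ) : ℂ)) * g mc) := by
  rw [← fourier_eq_integral_mul_cexp] at hFTint ⊢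
  exact stmt_3_general (φ := fun a x ↦ ρ a x) hcont.measurable
    (fun a ↦ measurePreserving_of_abs_det_eq_one volume (hdet a))
    (schwartzMap_integrable_prod _ _ f) (schwartzMap_integrable_prod _ _ g) l μ hF1
    hF1cont.continuousAt hF1int hFTint
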